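/- Let n ≥ 3 and let B ⊆ ℝ^n be a convex body such that every closed convex subset of B is parkable in B. Then B is centrally symmetric: B = -B. -/

import Mathlib

/-!
Parkability of segments says that no chord of `B` is longer than the parallel chord through `0`.
If a functional `f ≥ 0` on `B` supported `B` at `0`, then `B ∩ ker f` would be closed under
differences, hence a bounded additive group, hence trivial, although in dimension at least two
it contains a translate of some chord parallel to `ker f`; so `0` is interior and `B` is the
unit ball of its gauge `g`. Then the chord of `B` through `0` in direction `x` is a maximal one,
and a functional supporting `B - B` at this chord supports `B` at both of its ends. Hence `g` and
`y ↦ g (-y)`, scaled to the value `1` at `x`, have a common subgradient there: on any line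
avoiding `0` they have the same logarithmic derivative outside a countable set, and their ratio
is constant. Joining `u` to `-u` through a vector independent of `u` gives
`g u / g (-u) = g (-u) / g u`.
-/

open Set Filter Topology Asymptotics

theorem eq_of_hasDerivAt_zero_off_countable {φ : ℝ → ℝ} {s : Set ℝ} (hφ : Continuous φ)
    (hs : s.Countable) (hderiv : ∀ t ∉ s, HasDerivAt φ 0 t) (a b : ℝ) : φ a = φ b := by
  have hint := MeasureTheory.integral_eq_of_hasDerivAt_off_countable φ 0 (a := a) (b := b) hs
    hφ.continuousOn (fun t ht ↦ hderiv t ht.2) intervalIntegrable_const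
  simp only [Pi.zero_apply, intervalIntegral.integral_zero] at hint
  linarith

/-- `G` selects a subgradient of the function `f` on the real line at every point. -/
def IsSubgradient (f G : ℝ → ℝ) : Prop :=
  ∀ s t, f t + G t * (s - t) ≤ f s

namespace IsSubgradient

variable {f G : ℝ → ℝ}

theorem monotone (h : IsSubgradient f G) : Monotone G := by
  intro s t hst
  rcases hst.eq_or_lt with rfl | hlt
  · rfl
  · nlinarith [h s t, h t s]

theorem convexOn (h : IsSubgradient f G) : ConvexOn ℝ univ f := by
  refine ⟨convex_univ, fun x _ y _ a b ha hb hab ↦ ?_⟩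
  obtain rfl : b = 1 - a := by linarith
  simp only [smul_eq_mul]
  nlinarith [mul_le_mul_of_nonneg_left (h x (a * x + (1 - a) * y)) ha,
    mul_le_mul_of_nonneg_left (h y (a * x + (1 - a) * y)) hb]

theorem continuous (h : IsSubgradient f G) : Continuous f :=
  continuousOn_univ.1 (h.convexOn.continuousOn isOpen_univ)

theorem hasDerivAt (h : IsSubgradient f G) {t : ℝ} (hG : ContinuousAt G t) :
    HasDerivAt f (G t) t := by
  have hsmall : (fun s ↦ G s - G t) =o[𝓝 t] (fun _ ↦ (1 : ℝ)) := by
    rw [isLittleO_one_iff]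
    simpa using hG.sub_const (G t)
  have hprod := hsmall.mul_isBigO (isBigO_refl (fun s ↦ s - t) (𝓝 t))
  simp only [one_mul] at hprod
  refine hasDerivAt_iff_isLittleO.2 (IsBigO.trans_isLittleO (IsBigO.of_bound' ?_) hprod)
  refine Eventually.of_forall fun s ↦ ?_
  simp only [smul_eq_mul]
  exact abs_le_abs_of_nonneg (by linarith [h s t]) (by linarith [h t s])

theorem div_eq_div {g h m : ℝ → ℝ} (hg : IsSubgradient g (fun t ↦ g t * m t))
    (hh : IsSubgradient h (fun t ↦ h t * m t)) (hpos : ∀ t, 0 < h t) (a b : ℝ) :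
    g a / h a = g b / h b := by
  refine eq_of_hasDerivAt_zero_off_countable (hg.continuous.div hh.continuous fun t ↦ (hpos t).ne')
    (hg.monotone.countable_not_continuousAt.union hh.monotone.countable_not_continuousAt)
    (fun t ht ↦ ?_) a b
  simp only [mem_union, mem_ofPred_eq, not_or, not_not] at ht
  have hquot := (hg.hasDerivAt ht.1).div (hh.hasDerivAt ht.2) (hpos t).ne'
  have hzero : g t * m t * h t - g t * (h t * m t) = 0 := by ring
  rwa [hzero, zero_div] at hquot

end IsSubgradient

/-- `C` is parkable in `B`: some translate of `C` contains the origin and lies in `B`. -/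
def Parkable {E : Type*} [AddCommGroup E] (C B : Set E) : Prop :=
  ∃ v : E, (0 : E) ∈ (fun x ↦ x + v) '' C ∧ (fun x ↦ x + v) '' C ⊆ B

section LinearAlgebra

variable {K V : Type*} [Field K] [AddCommGroup V] [Module K V]

theorem exists_ne_zero_map_eq_zero (hrank : 1 < Module.rank K V) (f : V →ₗ[K] K) :
    ∃ w ≠ 0, f w = 0 := by
  by_contra! hker
  have hinj : Function.Injective f :=
    (injective_iff_map_eq_zero f).2 fun w hw ↦ by_contra fun hne ↦ hker w hne hw
  refine hrank.not_ge ?_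
  simpa using LinearMap.lift_rank_le_of_injective f hinj

theorem lineMap_ne_zero {u v : V} (huv : LinearIndependent K ![u, v]) (t : K) :
    AffineMap.lineMap (k := K) u v t ≠ 0 := by
  intro h
  rw [AffineMap.lineMap_apply_module] at h
  obtain ⟨h₁, h₂⟩ := LinearIndependent.pair_iff.1 huv _ _ h
  simp [h₂] at h₁

end LinearAlgebra

section Algebraic

open scoped Pointwise

variable {E : Type*} [AddCommGroup E] [Module ℝ E]

/-- Every segment between two points of `B` is parkable in `B`. For convex `B` this says that no
chord of `B` is longer than the parallel chord through the origin. -/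
def ChordsParkable (B : Set E) : Prop :=
  ∀ a ∈ B, ∀ b ∈ B, Parkable (segment ℝ a b) B

theorem ChordsParkable.exists_smul_mem {B : Set E} (hB : ChordsParkable B) {w : E}
    (hw : w ∈ B - B) : ∃ l ∈ Icc (0 : ℝ) 1, l • w ∈ B ∧ (1 - l) • -w ∈ B := by
  obtain ⟨a, ha, b, hb, rfl⟩ := hw
  obtain ⟨v, ⟨c, ⟨s, t, hs, ht, hst, rfl⟩, hcv⟩, hsub⟩ := hB a ha b hb
  obtain rfl : v = -(s • a + t • b) := (neg_eq_of_add_eq_zero_right hcv).symm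
  obtain rfl : s = 1 - t := by linarith
  refine ⟨t, ⟨ht, by linarith⟩, ?_, ?_⟩
  · convert hsub ⟨a, left_mem_segment ℝ a b, rfl⟩ using 1
    module
  · convert hsub ⟨b, right_mem_segment ℝ a b, rfl⟩ using 1
    module

theorem ChordsParkable.zero_mem {B : Set E} (hB : ChordsParkable B) (hne : B.Nonempty) :
    (0 : E) ∈ B := by
  obtain ⟨b, hb⟩ := hne
  obtain ⟨l, -, hl, -⟩ := hB.exists_smul_mem (sub_mem_sub hb hb)
  simpa using hl

theorem map_le_gauge {B : Set E} (hB : Absorbent ℝ B) {f : E →ₗ[ℝ] ℝ} (hf : ∀ a ∈ B, f a ≤ 1)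
    (y : E) : f y ≤ gauge B y := by
  refine le_csInf hB.gauge_set_nonempty ?_
  rintro r ⟨hr, a, ha, rfl⟩
  simpa using mul_le_mul_of_nonneg_left (hf a ha) hr.le

theorem ChordsParkable.sub_mem_of_map_lt {B : Set E} (hB : ChordsParkable B) {f : E →ₗ[ℝ] ℝ}
    (hf : ∀ x ∈ B, 0 ≤ f x) {a b : E} (ha : a ∈ B) (hb : b ∈ B) (hab : f b < f a) : a - b ∈ B := by
  obtain ⟨l, ⟨-, hl⟩, hmem, hmem'⟩ := hB.exists_smul_mem (sub_mem_sub ha hb)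
  have hnonneg := hf _ hmem'
  rw [map_smul, map_neg, map_sub, smul_eq_mul] at hnonneg
  obtain rfl : l = 1 := by nlinarith
  simpa using hmem

end Algebraic

section TopologicalVectorSpace

open scoped Pointwise

variable {E : Type*} [AddCommGroup E] [Module ℝ E] [TopologicalSpace E] [IsTopologicalAddGroup E]
  [ContinuousSMul ℝ E] {B : Set E}

theorem exists_pos_add_smul_mem {s : Set E} {x : E} (hs : s ∈ 𝓝 x) (v : E) :
    ∃ r : ℝ, 0 < r ∧ x + r • v ∈ s := by
  have hlim : Tendsto (fun r : ℝ ↦ x + r • v) (𝓝[>] 0) (𝓝 x) := by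
    refine tendsto_nhdsWithin_of_tendsto_nhds (Continuous.tendsto' ?_ _ _ ?_)
    · fun_prop
    · simp
  obtain ⟨r, hr, hmem⟩ := (eventually_mem_nhdsWithin.and (hlim.eventually_mem hs)).exists
  exact ⟨r, hr, hmem⟩

theorem map_lt_of_mem_interior {s : Set E} {f : StrongDual ℝ E} {c : ℝ} (hf : f ≠ 0)
    (hle : ∀ y ∈ s, f y ≤ c) {x : E} (hx : x ∈ interior s) : f x < c := by
  obtain ⟨v, hv⟩ : ∃ v, 0 < f v := by
    obtain ⟨v, hv⟩ := DFunLike.exists_ne hf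
    rcases lt_or_gt_of_ne hv with hneg | hpos
    · exact ⟨-v, by simpa using hneg⟩
    · exact ⟨v, hpos⟩
  obtain ⟨r, hr, hmem⟩ := exists_pos_add_smul_mem (mem_interior_iff_mem_nhds.1 hx) v
  have hbound := hle _ hmem
  rw [map_add, map_smul, smul_eq_mul] at hbound
  linarith [mul_pos hr hv]

theorem gauge_le_one_iff_mem_of_isClosed (hconv : Convex ℝ B) (hclosed : IsClosed B)
    (hnhds : B ∈ 𝓝 0) {x : E} : gauge B x ≤ 1 ↔ x ∈ B := by
  rw [gauge_le_one_iff_mem_closure hconv hnhds, hclosed.closure_eq]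

theorem inv_gauge_smul_mem (hconv : Convex ℝ B) (hclosed : IsClosed B) (hnhds : B ∈ 𝓝 0) (x : E) :
    (gauge B x)⁻¹ • x ∈ B := by
  rw [← gauge_le_one_iff_mem_of_isClosed hconv hclosed hnhds,
    gauge_smul_of_nonneg (inv_nonneg.2 (gauge_nonneg x)), smul_eq_mul]
  exact inv_mul_le_one

theorem ChordsParkable.sub_mem_of_map_le (hB : ChordsParkable B) (hconv : Convex ℝ B)
    (hclosed : IsClosed B) {f : E →ₗ[ℝ] ℝ} (hf : ∀ x ∈ B, 0 ≤ f x) {z : E} (hz : z ∈ B)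
    (hfz : 0 < f z) {a b : E} (ha : a ∈ B) (hb : b ∈ B) (hab : f b ≤ f a) : a - b ∈ B := by
  have hopen : openSegment ℝ (a - b) z ⊆ B := by
    rintro _ ⟨s, t, hs, ht, hst, rfl⟩
    have hmem := hB.sub_mem_of_map_lt hf (hconv ha hz hs.le ht.le hst)
      (hconv hb (hB.zero_mem ⟨z, hz⟩) hs.le ht.le hst) (by
        simp only [map_add, map_smul, smul_eq_mul, map_zero]
        nlinarith)
    convert hmem using 1
    module
  exact closure_minimal hopen hclosed
    (segment_subset_closure_openSegment (left_mem_segment ℝ (a - b) z))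

end TopologicalVectorSpace

section Normed

open scoped Pointwise

variable {E : Type*} [NormedAddCommGroup E] [NormedSpace ℝ E] {B : Set E}

theorem eq_zero_of_mem_of_isBounded {K : AddSubgroup E} (hK : Bornology.IsBounded (K : Set E))
    {x : E} (hx : x ∈ K) : x = 0 := by
  by_contra hne
  obtain ⟨R, hR⟩ := hK.exists_norm_le
  obtain ⟨k, hk⟩ := exists_lt_nsmul (norm_pos_iff.2 hne) R
  have hle := hR _ (K.nsmul_mem hx k)
  rw [← Nat.cast_smul_eq_nsmul ℝ, norm_smul, Real.norm_natCast, ← nsmul_eq_mul] at hle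
  exact hk.not_ge hle

namespace ChordsParkable

theorem eq_zero_of_map_eq_zero (hB : ChordsParkable B) (hconv : Convex ℝ B) (hclosed : IsClosed B)
    (hbdd : Bornology.IsBounded B) {f : E →ₗ[ℝ] ℝ} (hf : ∀ x ∈ B, 0 ≤ f x) {z : E} (hz : z ∈ B)
    (hfz : 0 < f z) {x : E} (hx : x ∈ B) (hfx : f x = 0) : x = 0 := by
  let K : AddSubgroup E := AddSubgroup.ofSub {y | y ∈ B ∧ f y = 0} ⟨x, hx, hfx⟩ (by
    rintro y ⟨hy, hfy⟩ y' ⟨hy', hfy'⟩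
    rw [← sub_eq_add_neg]
    exact ⟨hB.sub_mem_of_map_le hconv hclosed hf hz hfz hy hy' (by rw [hfy, hfy']),
      by rw [map_sub, hfy, hfy', sub_zero]⟩)
  exact eq_zero_of_mem_of_isBounded (K := K) (hbdd.subset fun y hy ↦ hy.1) ⟨hx, hfx⟩

theorem zero_mem_interior (hB : ChordsParkable B) (hrank : 1 < Module.rank ℝ E)
    (hconv : Convex ℝ B) (hclosed : IsClosed B) (hbdd : Bornology.IsBounded B)
    (hint : (interior B).Nonempty) : (0 : E) ∈ interior B := by
  by_contra h0
  obtain ⟨F, hF, hFB⟩ := geometric_hahn_banach_of_nonempty_interior_point hconv h0 hint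
  obtain ⟨z, hz⟩ := hint
  have hzB := interior_subset hz
  let f : E →ₗ[ℝ] ℝ := -F.toLinearMap
  have hfz : 0 < f z := by
    simpa [f] using map_lt_of_mem_interior hF hFB hz
  have hf : ∀ x ∈ B, 0 ≤ f x := by simpa [f] using hFB
  obtain ⟨w, hw, hfw⟩ := exists_ne_zero_map_eq_zero hrank f
  obtain ⟨r, hr, hmem⟩ := exists_pos_add_smul_mem (mem_interior_iff_mem_nhds.1 hz) w
  have hfrw : f (r • w) = 0 := by
    rw [map_smul, hfw, smul_zero]
  have hrw : r • w ∈ B := by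
    simpa using hB.sub_mem_of_map_le hconv hclosed hf hzB hfz hmem hzB
      (by rw [map_add, hfrw, add_zero])
  exact smul_ne_zero hr.ne' hw
    (hB.eq_zero_of_map_eq_zero hconv hclosed hbdd hf hzB hfz hrw hfrw)

end ChordsParkable

theorem gauge_pos_of_ne_zero (hnhds : B ∈ 𝓝 0) (hbdd : Bornology.IsBounded B) {x : E}
    (hx : x ≠ 0) : 0 < gauge B x :=
  (gauge_pos (absorbent_nhds_zero hnhds) ((NormedSpace.isVonNBounded_iff ℝ).2 hbdd)).2 hx

namespace ChordsParkable

theorem le_of_smul_mem_sub (hB : ChordsParkable B) (hnhds : B ∈ 𝓝 0)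
    (hbdd : Bornology.IsBounded B) {x : E} (hx : x ≠ 0) {r : ℝ} (hr : 0 ≤ r)
    (hmem : r • x ∈ B - B) : r ≤ (gauge B x)⁻¹ + (gauge B (-x))⁻¹ := by
  obtain ⟨l, ⟨hl0, hl1⟩, hpos, hneg⟩ := hB.exists_smul_mem hmem
  rw [smul_smul] at hpos
  rw [← smul_neg, smul_smul] at hneg
  have hp := gauge_le_one_of_mem hpos
  have hq := gauge_le_one_of_mem hneg
  rw [gauge_smul_of_nonneg (mul_nonneg hl0 hr), smul_eq_mul,
    ← le_div_iff₀ (gauge_pos_of_ne_zero hnhds hbdd hx), one_div] at hp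
  rw [gauge_smul_of_nonneg (mul_nonneg (sub_nonneg.2 hl1) hr), smul_eq_mul,
    ← le_div_iff₀ (gauge_pos_of_ne_zero hnhds hbdd (neg_ne_zero.2 hx)), one_div] at hq
  linarith

theorem smul_notMem_interior_sub (hB : ChordsParkable B) (hnhds : B ∈ 𝓝 0)
    (hbdd : Bornology.IsBounded B) {x : E} (hx : x ≠ 0) :
    ((gauge B x)⁻¹ + (gauge B (-x))⁻¹) • x ∉ interior (B - B) := by
  intro hmem
  obtain ⟨r, hr, hlonger⟩ := exists_pos_add_smul_mem (mem_interior_iff_mem_nhds.1 hmem) x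
  rw [← add_smul] at hlonger
  have hp := inv_nonneg.2 (gauge_nonneg (s := B) x)
  have hq := inv_nonneg.2 (gauge_nonneg (s := B) (-x))
  linarith [hB.le_of_smul_mem_sub hnhds hbdd hx (by positivity) hlonger]

theorem exists_map_le_inv_gauge (hB : ChordsParkable B) (hconv : Convex ℝ B) (hclosed : IsClosed B)
    (hnhds : B ∈ 𝓝 0) (hbdd : Bornology.IsBounded B) {x : E} (hx : x ≠ 0) :
    ∃ f : StrongDual ℝ E, f x = 1 ∧ (∀ a ∈ B, f a ≤ (gauge B x)⁻¹) ∧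
      ∀ a ∈ B, -f a ≤ (gauge B (-x))⁻¹ := by
  have hp := gauge_pos_of_ne_zero hnhds hbdd hx
  have hq := gauge_pos_of_ne_zero hnhds hbdd (neg_ne_zero.2 hx)
  have hpx := inv_gauge_smul_mem hconv hclosed hnhds x
  have hqx := inv_gauge_smul_mem hconv hclosed hnhds (-x)
  set p := gauge B x
  set q := gauge B (-x)
  have h0 : (0 : E) ∈ interior (B - B) := by
    have hmem := mem_interior_iff_mem_nhds.2 hnhds
    simpa using subset_interior_sub (sub_mem_sub hmem hmem)
  obtain ⟨F, hF, hFle⟩ := geometric_hahn_banach_of_nonempty_interior_point (hconv.sub hconv)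
    (hB.smul_notMem_interior_sub hnhds hbdd hx) ⟨0, h0⟩
  have hFx : 0 < F x := by
    have hlt := map_lt_of_mem_interior hF hFle h0
    rw [map_zero, map_smul, smul_eq_mul] at hlt
    exact pos_of_mul_pos_right hlt (by positivity)
  have hchord : ∀ a ∈ B, ∀ b ∈ B, F a - F b ≤ p⁻¹ * F x + q⁻¹ * F x := fun a ha b hb ↦ by
    simpa [add_mul] using hFle _ (sub_mem_sub ha hb)
  refine ⟨(F x)⁻¹ • F, by simp [hFx.ne'], fun a ha ↦ ?_, fun a ha ↦ ?_⟩
  · have hle := hchord a ha _ hqx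
    simp only [map_smul, map_neg, smul_eq_mul] at hle
    change (F x)⁻¹ * F a ≤ p⁻¹
    rw [inv_mul_le_iff₀ hFx]
    linarith
  · have hle := hchord _ hpx a ha
    simp only [map_smul, smul_eq_mul] at hle
    change -((F x)⁻¹ * F a) ≤ q⁻¹
    rw [← mul_neg, inv_mul_le_iff₀ hFx]
    linarith

theorem exists_common_subgradient (hB : ChordsParkable B) (hconv : Convex ℝ B)
    (hclosed : IsClosed B) (hnhds : B ∈ 𝓝 0) (hbdd : Bornology.IsBounded B) {x : E} (hx : x ≠ 0) :
    ∃ f : StrongDual ℝ E, f x = 1 ∧ (∀ y, gauge B x * f y ≤ gauge B y) ∧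
      ∀ y, gauge B (-x) * f y ≤ gauge B (-y) := by
  obtain ⟨f, hfx, hle, hneg_le⟩ := hB.exists_map_le_inv_gauge hconv hclosed hnhds hbdd hx
  have hp := gauge_pos_of_ne_zero hnhds hbdd hx
  have hq := gauge_pos_of_ne_zero hnhds hbdd (neg_ne_zero.2 hx)
  have habs : Absorbent ℝ B := absorbent_nhds_zero hnhds
  refine ⟨f, hfx, fun y ↦ ?_, fun y ↦ ?_⟩
  · refine map_le_gauge habs (f := gauge B x • f.toLinearMap) (fun a ha ↦ ?_) y
    exact (le_inv_mul_iff₀ hp).1 (by simpa using hle a ha)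
  · have hbound := map_le_gauge habs (f := -(gauge B (-x) • f.toLinearMap)) (fun a ha ↦ ?_) (-y)
    · simpa using hbound
    · have hmul := (le_inv_mul_iff₀ hq).1 ((hneg_le a ha).trans_eq (mul_one _).symm)
      simpa using hmul

theorem gauge_div_gauge_neg_eq (hB : ChordsParkable B) (hconv : Convex ℝ B) (hclosed : IsClosed B)
    (hnhds : B ∈ 𝓝 0) (hbdd : Bornology.IsBounded B) {u v : E}
    (huv : LinearIndependent ℝ ![u, v]) :
    gauge B u / gauge B (-u) = gauge B v / gauge B (-v) := by
  let line : ℝ → E := AffineMap.lineMap u v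
  choose f hf_self hf_pos hf_neg using fun t ↦
    hB.exists_common_subgradient hconv hclosed hnhds hbdd (lineMap_ne_zero huv t)
  have hf_line : ∀ s t, f t (line s) = 1 + f t (v - u) * (s - t) := fun s t ↦ by
    have hline : line s = line t + (s - t) • (v - u) := by
      simp only [line, AffineMap.lineMap_apply_module]
      module
    rw [hline, map_add, hf_self, map_smul, smul_eq_mul, mul_comm]
  have hg : IsSubgradient (fun t ↦ gauge B (line t))
      (fun t ↦ gauge B (line t) * f t (v - u)) := fun s t ↦ by
    linear_combination hf_pos t (line s) - gauge B (line t) * hf_line s t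
  have hh : IsSubgradient (fun t ↦ gauge B (-line t))
      (fun t ↦ gauge B (-line t) * f t (v - u)) := fun s t ↦ by
    linear_combination hf_neg t (line s) - gauge B (-line t) * hf_line s t
  simpa [line] using hg.div_eq_div hh
    (fun t ↦ gauge_pos_of_ne_zero hnhds hbdd (neg_ne_zero.2 (lineMap_ne_zero huv t))) 0 1

theorem gauge_neg_eq (hB : ChordsParkable B) (hrank : 1 < Module.rank ℝ E) (hconv : Convex ℝ B)
    (hclosed : IsClosed B) (hnhds : B ∈ 𝓝 0) (hbdd : Bornology.IsBounded B) (u : E) :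
    gauge B (-u) = gauge B u := by
  rcases eq_or_ne u 0 with rfl | hu
  · simp
  obtain ⟨v, huv⟩ := exists_linearIndependent_pair_of_one_lt_rank hrank hu
  have hneg : LinearIndependent ℝ ![-u, v] := by
    simpa using huv
  have hratio := (hB.gauge_div_gauge_neg_eq hconv hclosed hnhds hbdd huv).trans
    (hB.gauge_div_gauge_neg_eq hconv hclosed hnhds hbdd hneg).symm
  have hp := gauge_pos_of_ne_zero hnhds hbdd hu
  have hq := gauge_pos_of_ne_zero hnhds hbdd (neg_ne_zero.2 hu)
  rw [neg_neg, div_eq_div_iff hq.ne' hp.ne', mul_self_inj hp.le hq.le] at hratio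
  exact hratio.symm

end ChordsParkable

end Normed

theorem stmt_9_general {E : Type*} [NormedAddCommGroup E] [NormedSpace ℝ E]
    (hrank : 1 < Module.rank ℝ E) {B : Set E} (hclosed : IsClosed B)
    (hbdd : Bornology.IsBounded B) (hconv : Convex ℝ B) (hint : (interior B).Nonempty)
    (hB : ChordsParkable B) : B = -B := by
  have hnhds : B ∈ 𝓝 0 :=
    mem_interior_iff_mem_nhds.1 (hB.zero_mem_interior hrank hconv hclosed hbdd hint)
  ext x
  rw [Set.mem_neg, ← gauge_le_one_iff_mem_of_isClosed hconv hclosed hnhds,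
    ← gauge_le_one_iff_mem_of_isClosed hconv hclosed hnhds,
    hB.gauge_neg_eq hrank hconv hclosed hnhds hbdd]

/-- A convex body `B ⊆ ℝⁿ` (n ≥ 3) all of whose nonempty closed convex subsets
are parkable in `B` is centrally symmetric. -/
theorem stmt_9 (n : ℕ) (hn : 3 ≤ n) (B : Set (EuclideanSpace ℝ (Fin n)))
    (hBcomp : IsCompact B) (hBconv : Convex ℝ B)
    (hBint : (interior B).Nonempty) (hB0 : (0 : EuclideanSpace ℝ (Fin n)) ∈ B)
    (hpark : ∀ C : Set (EuclideanSpace ℝ (Fin n)),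
      C ⊆ B → C.Nonempty → IsClosed C → Convex ℝ C →
      ∃ v : EuclideanSpace ℝ (Fin n),
        (0 : EuclideanSpace ℝ (Fin n)) ∈ (fun x => x + v) '' C ∧
        (fun x => x + v) '' C ⊆ B) :
    B = -B := by
  have hrank : 1 < Module.rank ℝ (EuclideanSpace ℝ (Fin n)) := by
    simpa using Module.lt_rank_of_lt_finrank (R := ℝ) (M := EuclideanSpace ℝ (Fin n)) (n := 1)
      (by rw [finrank_euclideanSpace_fin]; omega)
  exact stmt_9_general hrank hBcomp.isClosed hBcomp.isBounded hBconv hBint fun a ha b hb ↦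
    hpark _ (hBconv.segment_subset ha hb) ⟨a, left_mem_segment ℝ a b⟩
      (convexHull_pair (𝕜 := ℝ) a b ▸ (toFinite {a, b}).isClosed_convexHull ℝ) (convex_segment a b)
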